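/- arXiv:2407.07280 — 5 statements merged into one kernel-verified Lean document; each statement's English description precedes it below -/
import Mathlib

section
/- Let K be a field, let q ∈ K with q ≠ 0, let b ∈ K, and let a : ℤ → K be a sequence satisfying the three-term recurrence a(n+1) + a(n-1) = (q + q⁻¹)·a(n) for all n ∈ ℤ. If a(1)·a(-1) = a(0)² − b, then a(n+1)·a(n-1) = a(n)² − b for all n ∈ ℤ. (Equivalently, for every n ∈ ℤ the elements a(n+1) and a(n-1) are the two solutions of the quadratic equation x² − (q + q⁻¹)·a(n)·x + a(n)² − b = 0.) -/
/-- If a sequence `a : ℤ → K` satisfies the three-term recurrence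
`a (n+1) + a (n-1) = (q + q⁻¹) * a n` and the initial condition
`a 1 * a (-1) = a 0 ^ 2 - b`, then `a (n+1) * a (n-1) = a n ^ 2 - b` for all `n : ℤ`. -/
theorem stmt_0 {K : Type*} [Field K] (q : K) (hq : q ≠ 0) (b : K) (a : ℤ → K)
    (hrec : ∀ n : ℤ, a (n + 1) + a (n - 1) = (q + q⁻¹) * a n)
    (hinit : a 1 * a (-1) = (a 0) ^ 2 - b) :
    ∀ n : ℤ, a (n + 1) * a (n - 1) = (a n) ^ 2 - b := by
  have key : ∀ n : ℤ, a (n + 1 + 1) * a (n + 1 - 1) - a (n + 1) ^ 2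
      = a (n + 1) * a (n - 1) - a n ^ 2 := by
    intro n
    have h1 := hrec (n + 1)
    have h0 := hrec n
    rw [add_sub_cancel_right] at h1 ⊢
    linear_combination a n * h1 - a (n + 1) * h0
  intro n
  induction n using Int.induction_on with
  | zero => simpa using hinit
  | succ k ih => linear_combination key k + ih
  | pred k ih =>
    have h := key (-(k : ℤ) - 1)
    rw [sub_add_cancel] at h
    rw [sub_add_cancel]
    linear_combination ih - h
end

section
/- Let K be a field, let q ∈ K with q ≠ 0 and q² ≠ 1, let b ∈ K, and let a : ℤ → K satisfy the three-term recurrence a(n+1) + a(n-1) = (q + q⁻¹)·a(n) for all n ∈ ℤ together with a(1)·a(-1) = a(0)² − b. Then for every integer n ≥ 0 one has a(n)·a(-n) = a(0)² − [n]²·b, where [n] := (qⁿ − q⁻ⁿ)/(q − q⁻¹) is the balanced q-integer. -/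
/-- If a sequence `a : ℤ → K` satisfies the three-term recurrence and the initial
condition `a 1 * a (-1) = a 0 ^ 2 - b`, then for every `n : ℕ`,
`a n * a (-n) = a 0 ^ 2 - [n]^2 * b`, where `[n] = (qⁿ - q⁻ⁿ)/(q - q⁻¹)`. -/
theorem stmt_2 {K : Type*} [Field K] (q : K) (hq : q ≠ 0) (hq2 : q ^ 2 ≠ 1) (b : K)
    (a : ℤ → K)
    (hrec : ∀ n : ℤ, a (n + 1) + a (n - 1) = (q + q⁻¹) * a n)
    (hinit : a 1 * a (-1) = (a 0) ^ 2 - b) :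
    ∀ n : ℕ, a (n : ℤ) * a (-(n : ℤ)) =
      (a 0) ^ 2 - ((q ^ n - q⁻¹ ^ n) / (q - q⁻¹)) ^ 2 * b := by
  have hqp : q * q⁻¹ = 1 := mul_inv_cancel₀ hq
  generalize q⁻¹ = p at *
  have hd : q - p ≠ 0 := by
    intro h
    apply hq2
    linear_combination q * h + hqp
  have h0 : a 1 + a (-1) = (q + p) * a 0 := by simpa using hrec 0
  have hpos : ∀ n : ℕ, (q - p) * a n = (a 1 - p * a 0) * q ^ n + (q * a 0 - a 1) * p ^ n ∧
      (q - p) * a (n + 1) =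
        (a 1 - p * a 0) * q ^ (n + 1) + (q * a 0 - a 1) * p ^ (n + 1) := by
    intro n
    induction n with
    | zero => constructor <;> simp <;> ring
    | succ k ih =>
      obtain ⟨h1, h2⟩ := ih
      have h := hrec (k + 1)
      rw [show (k : ℤ) + 1 - 1 = k by ring] at h
      push_cast
      refine ⟨h2, ?_⟩
      linear_combination (q - p) * h + (q + p) * h2 - h1 +
        ((a 1 - p * a 0) * q ^ k + (q * a 0 - a 1) * p ^ k) * hqp
  have hneg : ∀ n : ℕ, (q - p) * a (-n) = (a 1 - p * a 0) * p ^ n + (q * a 0 - a 1) * q ^ n ∧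
      (q - p) * a (-(n + 1)) =
        (a 1 - p * a 0) * p ^ (n + 1) + (q * a 0 - a 1) * q ^ (n + 1) := by
    intro n
    induction n with
    | zero =>
      constructor
      · simp; ring
      · simp
        linear_combination (q - p) * h0
    | succ k ih =>
      obtain ⟨h1, h2⟩ := ih
      have h := hrec (-(k + 1))
      rw [show -((k : ℤ) + 1) + 1 = -k by ring,
        show -((k : ℤ) + 1) - 1 = -(k + 1 + 1) by ring] at h
      push_cast
      refine ⟨h2, ?_⟩
      linear_combination (q - p) * h + (q + p) * h2 - h1 +
        ((a 1 - p * a 0) * p ^ k + (q * a 0 - a 1) * q ^ k) * hqp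
  have hAB : (a 1 - p * a 0) * (q * a 0 - a 1) = -b := by
    linear_combination hinit - a 1 * h0 - a 0 ^ 2 * hqp
  intro n
  have h1 := (hpos n).1
  have h2 := (hneg n).1
  have hn : q ^ n * p ^ n = 1 := by rw [← mul_pow, hqp, one_pow]
  have key : (q - p) ^ 2 * (a n * a (-n)) =
      (q - p) ^ 2 * a 0 ^ 2 - (q ^ n - p ^ n) ^ 2 * b := by
    have : (q - p) ^ 2 * (a n * a (-n)) = ((q - p) * a n) * ((q - p) * a (-n)) := by ring
    rw [this, h1, h2]
    linear_combination (q ^ n - p ^ n) ^ 2 * hAB +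
      ((a 1 - p * a 0) + (q * a 0 - a 1)) ^ 2 * hn
  field_simp
  linear_combination key
end

section
/- Let K be a field, let q ∈ K with q ≠ 0 and q² ≠ 1, let b ∈ K, and let a : ℤ → K satisfy the three-term recurrence a(n+1) + a(n-1) = (q + q⁻¹)·a(n) for all n ∈ ℤ together with a(1)·a(-1) = a(0)² − b. Then for every integer n ≥ 1, both a(n) and a(-n) are roots of the quadratic polynomial x² − (qⁿ + q⁻ⁿ)·a(0)·x + a(0)² − [n]²·b; that is, a(±n)² − (qⁿ + q⁻ⁿ)·a(0)·a(±n) + a(0)² − [n]²·b = 0, where [n] := (qⁿ − q⁻ⁿ)/(q − q⁻¹). -/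
theorem aux_closed {K : Type*} [Field K] (q r : K) (hqr : q * r = 1) (c : ℕ → K)
    (hc : ∀ n, c (n + 2) + c n = (q + r) * c (n + 1)) (n : ℕ) :
    (q - r) * c n = (c 1 - r * c 0) * q ^ n + (q * c 0 - c 1) * r ^ n ∧
    (q - r) * c (n + 1) = (c 1 - r * c 0) * q ^ (n + 1) + (q * c 0 - c 1) * r ^ (n + 1) := by
  induction n with
  | zero => constructor <;> simp <;> ring
  | succ k ih =>
    obtain ⟨h1, h2⟩ := ih
    refine ⟨h2, ?_⟩
    have h := hc k
    show (q - r) * c (k + 2) = _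
    linear_combination (q - r) * h + (q + r) * h2 - h1 +
      ((c 1 - r * c 0) * q ^ k + (q * c 0 - c 1) * r ^ k) * hqr

theorem aux_main {K : Type*} [Field K] (q r b : K) (hqr : q * r = 1) (hd : q - r ≠ 0) (c : ℕ → K)
    (hc : ∀ n, c (n + 2) + c n = (q + r) * c (n + 1))
    (hb : c 1 * ((q + r) * c 0 - c 1) = c 0 ^ 2 - b) (n : ℕ) :
    c n ^ 2 - (q ^ n + r ^ n) * c 0 * c n + c 0 ^ 2
      - ((q ^ n - r ^ n) / (q - r)) ^ 2 * b = 0 := by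
  have hX := (aux_closed q r hqr c hc n).1
  have hQR : q ^ n * r ^ n = 1 := by rw [← mul_pow, hqr, one_pow]
  generalize q ^ n = Q at *
  generalize r ^ n = R at *
  have hb' : b = (c 1 - r * c 0) * (c 1 - q * c 0) := by
    linear_combination hb - c 0 ^ 2 * hqr
  have hE : ((q - r) * c n - Q * ((q - r) * c 0)) * ((q - r) * c n - R * ((q - r) * c 0))
      = (Q - R) ^ 2 * b := by
    rw [hX, hb']; ring
  have hdiv : (Q - R) / (q - r) * (q - r) = Q - R := div_mul_cancel₀ _ hd
  generalize (Q - R) / (q - r) = D at *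
  refine mul_left_cancel₀ (pow_ne_zero 2 hd) ?_
  rw [← hdiv] at hE
  linear_combination hE - (q - r) ^ 2 * c 0 ^ 2 * hQR

/-- If a sequence `a : ℤ → K` satisfies the three-term recurrence and the initial
condition `a 1 * a (-1) = a 0 ^ 2 - b`, then for every `n ≥ 1` both `a n` and `a (-n)`
are roots of `x² - (qⁿ + q⁻ⁿ)·a 0·x + a 0² - [n]²·b`. -/
theorem stmt_3 {K : Type*} [Field K] (q : K) (hq : q ≠ 0) (hq2 : q ^ 2 ≠ 1) (b : K)
    (a : ℤ → K)
    (hrec : ∀ n : ℤ, a (n + 1) + a (n - 1) = (q + q⁻¹) * a n)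
    (hinit : a 1 * a (-1) = (a 0) ^ 2 - b) :
    ∀ n : ℕ, 1 ≤ n →
      (a (n : ℤ)) ^ 2 - (q ^ n + q⁻¹ ^ n) * a 0 * a (n : ℤ) +
        (a 0) ^ 2 - ((q ^ n - q⁻¹ ^ n) / (q - q⁻¹)) ^ 2 * b = 0 ∧
      (a (-(n : ℤ))) ^ 2 - (q ^ n + q⁻¹ ^ n) * a 0 * a (-(n : ℤ)) +
        (a 0) ^ 2 - ((q ^ n - q⁻¹ ^ n) / (q - q⁻¹)) ^ 2 * b = 0 := by
  have hqr : q * q⁻¹ = 1 := mul_inv_cancel₀ hq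
  have hd : q - q⁻¹ ≠ 0 := by
    intro h
    apply hq2
    linear_combination q * h + hqr
  have h0 := hrec 0
  norm_num at h0
  intro n _
  constructor
  · refine aux_main q q⁻¹ b hqr hd (fun n => a (n : ℤ)) ?_ ?_ n
    · intro k
      have h := hrec (k + 1)
      rw [show (k : ℤ) + 1 + 1 = k + 2 by ring, show (k : ℤ) + 1 - 1 = k by ring] at h
      push_cast
      exact h
    · simp only [Nat.cast_one, Nat.cast_zero]
      linear_combination hinit - a 1 * h0
  · refine aux_main q q⁻¹ b hqr hd (fun n => a (-(n : ℤ))) ?_ ?_ n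
    · intro k
      have h := hrec (-(k + 1))
      rw [show -((k : ℤ) + 1) + 1 = -k by ring, show -((k : ℤ) + 1) - 1 = -(k + 2) by ring] at h
      push_cast
      linear_combination h
    · simp only [Nat.cast_one, Nat.cast_zero, neg_zero]
      linear_combination hinit - a (-1) * h0
end

section
/- Let K be a field, let q ∈ K be nonzero, let R be an associative unital K-algebra, let F, Y ∈ R, and set Z := F·Y − q⁻²·(Y·F). Suppose Z commutes with both F and Y (Z·F = F·Z and Z·Y = Y·Z). Then for every n ≥ 0, the element (F + Y)ⁿ lies in the K-linear span of the monomials F^f · Z^z · Y^y with f + 2z + y = n. -/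
/-- If `Z := F * Y - q⁻² • (Y * F)` commutes with both `F` and `Y` in a `K`-algebra `R`,
then `(F + Y) ^ n` lies in the `K`-span of the monomials `F ^ f * Z ^ z * Y ^ y` with
`f + 2z + y = n`. -/
theorem stmt_7 {K : Type*} [Field K] (q : K) (hq : q ≠ 0)
    {R : Type*} [Ring R] [Algebra K R] (F Y Z : R)
    (hZ : Z = F * Y - (q⁻¹) ^ 2 • (Y * F))
    (hZF : Z * F = F * Z) (hZY : Z * Y = Y * Z) :
    ∀ n : ℕ, (F + Y) ^ n ∈
      Submodule.span K
        {x : R | ∃ f z y : ℕ, f + 2 * z + y = n ∧ x = F ^ f * Z ^ z * Y ^ y} := by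
  have hYF : Y * F = q ^ 2 • (F * Y) - q ^ 2 • Z := by
    rw [hZ, smul_sub, smul_smul, ← mul_pow, mul_inv_cancel₀ hq]
    simp
  have key : ∀ f : ℕ, ∃ a b : K,
      Y * F ^ (f + 1) = a • (F ^ (f + 1) * Y) + b • (F ^ f * Z) := by
    intro f
    induction f with
    | zero => exact ⟨q ^ 2, -q ^ 2, by simp [hYF, sub_eq_add_neg]⟩
    | succ f ih =>
      obtain ⟨a, b, h⟩ := ih
      refine ⟨a * q ^ 2, b - a * q ^ 2, ?_⟩
      rw [pow_succ F (f + 1), ← mul_assoc, h, add_mul, smul_mul_assoc, smul_mul_assoc,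
        mul_assoc _ Y F, hYF, mul_assoc _ Z F, hZF, ← mul_assoc (F ^ f), ← pow_succ, mul_sub,
        mul_smul_comm, mul_smul_comm, smul_sub, smul_smul, smul_smul, sub_smul, mul_assoc]
      abel
  intro n
  induction n with
  | zero => exact Submodule.subset_span ⟨0, 0, 0, by simp, by simp⟩
  | succ n ih =>
    rw [pow_succ']
    refine Submodule.span_induction
      (p := fun x _ => (F + Y) * x ∈ Submodule.span K
        {x : R | ∃ f z y : ℕ, f + 2 * z + y = n + 1 ∧ x = F ^ f * Z ^ z * Y ^ y})
      ?_ ?_ ?_ ?_ ih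
    · rintro x ⟨f, z, y, h, rfl⟩
      have hc : Y * Z ^ z = Z ^ z * Y :=
        ((show Commute Y Z from hZY.symm).pow_right z).eq
      rw [add_mul]
      refine Submodule.add_mem _ (Submodule.subset_span ⟨f + 1, z, y, by omega, ?_⟩) ?_
      · rw [pow_succ' F]; simp only [mul_assoc]
      · cases f with
        | zero =>
          refine Submodule.subset_span ⟨0, z, y + 1, by omega, ?_⟩
          rw [pow_zero, one_mul, ← mul_assoc, hc, pow_succ' Y, mul_assoc]
        | succ f =>
          obtain ⟨a, b, hk⟩ := key f
          have e : Y * (F ^ (f + 1) * Z ^ z * Y ^ y) =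
              a • (F ^ (f + 1) * Z ^ z * Y ^ (y + 1)) + b • (F ^ f * Z ^ (z + 1) * Y ^ y) := by
            rw [← mul_assoc, ← mul_assoc, hk, add_mul, add_mul]
            simp only [smul_mul_assoc]
            rw [mul_assoc _ Y, hc, pow_succ' Y, pow_succ' Z]
            simp only [mul_assoc]
          rw [e]
          exact Submodule.add_mem _
            (Submodule.smul_mem _ _ (Submodule.subset_span ⟨f + 1, z, y + 1, by omega, rfl⟩))
            (Submodule.smul_mem _ _ (Submodule.subset_span ⟨f, z + 1, y, by omega, rfl⟩))
    · simp
    · intro x y _ _ hx hy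
      rw [mul_add]
      exact Submodule.add_mem _ hx hy
    · intro a x _ hx
      rw [mul_smul_comm]
      exact Submodule.smul_mem _ _ hx
end

section
/- Let K be a field, let q ∈ K be nonzero, let R be an associative unital K-algebra, let F, Y ∈ R, set Z := F·Y − q⁻²·(Y·F), and suppose Z·F = F·Z and Z·Y = Y·Z. Let M be a left R-module and v ∈ M with Y·v = 0. Then for every n ≥ 0, the vector (F + Y)ⁿ·v − Fⁿ·v lies in the K-linear span of the vectors F^f · Z^z · v with f + 2z = n and z ≥ 1. -/
theorem aux_comm {K : Type*} [Field K] (q : K) (hq : q ≠ 0)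
    {R : Type*} [Ring R] [Algebra K R] (F Y Z : R)
    (hZ : Z = F * Y - (q⁻¹) ^ 2 • (Y * F))
    (hZF : Z * F = F * Z) (f : ℕ) :
    ∃ a c : K, Y * F ^ (f + 1) = a • (F ^ (f + 1) * Y) + c • (F ^ f * Z) := by
  have h0 : Y * F = q ^ 2 • (F * Y) - q ^ 2 • Z := by
    rw [hZ, smul_sub, smul_smul, ← mul_pow, mul_inv_cancel₀ hq]
    simp
  induction f with
  | zero => exact ⟨q ^ 2, - q ^ 2, by simp [h0, sub_eq_add_neg]⟩
  | succ f ih =>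
    obtain ⟨a, c, h⟩ := ih
    refine ⟨a * q ^ 2, c - a * q ^ 2, ?_⟩
    rw [pow_succ F (f + 1), ← mul_assoc, h, add_mul, smul_mul_assoc, smul_mul_assoc,
      mul_assoc _ Y F, h0, mul_assoc _ Z F, hZF, ← mul_assoc (F ^ f), ← pow_succ, mul_sub,
      mul_smul_comm, mul_smul_comm, mul_assoc (F ^ (f + 1)) F Y]
    module

theorem aux_vec {K : Type*} [Field K] (q : K) (hq : q ≠ 0)
    {R : Type*} [Ring R] [Algebra K R] (F Y Z : R)
    (hZ : Z = F * Y - (q⁻¹) ^ 2 • (Y * F))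
    (hZF : Z * F = F * Z) (hZY : Z * Y = Y * Z)
    {M : Type*} [AddCommGroup M] [Module K M] [Module R M] [IsScalarTower K R M]
    (v : M) (hv : Y • v = 0) (f z : ℕ) :
    Y • (F ^ f * Z ^ z) • v ∈ Submodule.span K
        {m : M | ∃ f' z' : ℕ, f' + 2 * z' = f + 2 * z + 1 ∧ 1 ≤ z' ∧
          m = (F ^ f' * Z ^ z') • v} := by
  have hY : (Y * Z ^ z) • v = 0 := by
    have h : Commute Z Y := hZY
    rw [← (h.pow_left z).eq, mul_smul, hv, smul_zero]
  cases f with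
  | zero => simp [← mul_smul, hY]
  | succ f =>
    obtain ⟨a, c, h⟩ := aux_comm q hq F Y Z hZ hZF f
    have e : Y • (F ^ (f + 1) * Z ^ z) • v = c • (F ^ f * Z ^ (z + 1)) • v := by
      rw [← mul_smul, ← mul_assoc, h, add_mul, smul_mul_assoc, smul_mul_assoc, add_smul,
        smul_assoc, smul_assoc, mul_assoc _ Y, mul_smul _ (Y * Z ^ z), hY, mul_assoc _ Z,
        ← pow_succ']
      simp
    rw [e]
    exact Submodule.smul_mem _ _ (Submodule.subset_span ⟨f, z + 1, by ring, by omega, rfl⟩)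

/-- If `Z := F * Y - q⁻² • (Y * F)` commutes with both `F` and `Y`, `M` is a left
`R`-module, and `Y • v = 0`, then `(F + Y) ^ n • v - F ^ n • v` lies in the `K`-span
of the vectors `(F ^ f * Z ^ z) • v` with `f + 2z = n` and `z ≥ 1`. -/
theorem stmt_8 {K : Type*} [Field K] (q : K) (hq : q ≠ 0)
    {R : Type*} [Ring R] [Algebra K R] (F Y Z : R)
    (hZ : Z = F * Y - (q⁻¹) ^ 2 • (Y * F))
    (hZF : Z * F = F * Z) (hZY : Z * Y = Y * Z)
    {M : Type*} [AddCommGroup M] [Module K M] [Module R M] [IsScalarTower K R M]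
    (v : M) (hv : Y • v = 0) :
    ∀ n : ℕ, (F + Y) ^ n • v - F ^ n • v ∈
      Submodule.span K
        {m : M | ∃ f z : ℕ, f + 2 * z = n ∧ 1 ≤ z ∧ m = (F ^ f * Z ^ z) • v} := by
  intro n
  induction n with
  | zero => simp
  | succ n ih =>
    have e : (F + Y) ^ (n + 1) • v - F ^ (n + 1) • v
        = (F + Y) • ((F + Y) ^ n • v - F ^ n • v) + Y • (F ^ n * Z ^ 0) • v := by
      simp only [pow_succ', mul_smul, smul_sub, add_smul, pow_zero, one_smul]
      abel
    rw [e]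
    refine Submodule.add_mem _ ?_ (aux_vec q hq F Y Z hZ hZF hZY v hv n 0)
    have : SMulCommClass R K M := IsScalarTower.to_smulCommClass'
    generalize (F + Y) ^ n • v - F ^ n • v = D at ih
    induction ih using Submodule.span_induction with
    | mem x hx =>
      obtain ⟨f, z, h1, h2, rfl⟩ := hx
      rw [add_smul]
      refine Submodule.add_mem _ (Submodule.subset_span ⟨f + 1, z, by omega, h2, ?_⟩) ?_
      · rw [← mul_smul, ← mul_assoc, pow_succ']
      · rw [← h1]
        exact aux_vec q hq F Y Z hZ hZF hZY v hv f z
    | zero => simp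
    | add x y _ _ hx hy => rw [smul_add]; exact Submodule.add_mem _ hx hy
    | smul a x _ hx => rw [smul_comm]; exact Submodule.smul_mem _ _ hx
end
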